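/- arXiv:1712.03593 — 2 statements merged into one kernel-verified Lean document; each statement's English description precedes it below -/
import Mathlib

section
/- Let U ⊆ ℝ³ be an open set and φ : U → ℂ a smooth map. Then φ is a generalized harmonic morphism (for every open V ⊆ ℂ ≅ ℝ² and every harmonic f : V → ℝ, the function f ∘ φ is biharmonic on φ^{-1}(V)) if and only if φ is horizontally weakly conformal (Σ_{i=1}^{3} (∂φ/∂x_i)² = 0 on U) and both φ and φ² are biharmonic as maps into ℂ. -/
open scoped BigOperators RealInnerProductSpace

noncomputable section

/-- `m`-dimensional Euclidean space. -/
abbrev E (m : ℕ) := EuclideanSpace ℝ (Fin m)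

/-- The Euclidean Laplacian of a real-valued function: the sum of the second
partial derivatives in the coordinate directions. -/
noncomputable def lap {m : ℕ} (f : E m → ℝ) (x : E m) : ℝ :=
  ∑ i : Fin m,
    fderiv ℝ (fun y => fderiv ℝ f y (EuclideanSpace.single i 1)) x (EuclideanSpace.single i 1)

/-- The Euclidean Laplacian of a complex-valued function (applied componentwise). -/
noncomputable def lapC {m : ℕ} (f : E m → ℂ) (x : E m) : ℂ :=
  ∑ i : Fin m,
    fderiv ℝ (fun y => fderiv ℝ f y (EuclideanSpace.single i 1)) x (EuclideanSpace.single i 1)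

/-- A (smooth) harmonic function on a set: `Δ f = 0` there. -/
def HarmonicOn {m : ℕ} (f : E m → ℝ) (s : Set (E m)) : Prop :=
  ContDiffOn ℝ (⊤ : ℕ∞) f s ∧ ∀ x ∈ s, lap f x = 0

/-- A (smooth) biharmonic function on a set: `Δ (Δ f) = 0` there. -/
def BiharmonicOn {m : ℕ} (f : E m → ℝ) (s : Set (E m)) : Prop :=
  ContDiffOn ℝ (⊤ : ℕ∞) f s ∧ ∀ x ∈ s, lap (lap f) x = 0

/-- A generalized harmonic morphism on `U`: it pulls back every harmonic function on an
open set `V` of the target to a biharmonic function on `U ∩ φ ⁻¹' V`. -/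
def IsGHM {m n : ℕ} (φ : E m → E n) (U : Set (E m)) : Prop :=
  ∀ V : Set (E n), IsOpen V → ∀ f : E n → ℝ, HarmonicOn f V →
    BiharmonicOn (f ∘ φ) (U ∩ φ ⁻¹' V)

/-- A harmonic morphism on `U`: it pulls back harmonic functions to harmonic functions. -/
def IsHM {m n : ℕ} (φ : E m → E n) (U : Set (E m)) : Prop :=
  ∀ V : Set (E n), IsOpen V → ∀ f : E n → ℝ, HarmonicOn f V →
    HarmonicOn (f ∘ φ) (U ∩ φ ⁻¹' V)

/-- A biharmonic morphism on `U`: it pulls back biharmonic functions to biharmonic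
functions. -/
def IsBHM {m n : ℕ} (φ : E m → E n) (U : Set (E m)) : Prop :=
  ∀ V : Set (E n), IsOpen V → ∀ f : E n → ℝ, BiharmonicOn f V →
    BiharmonicOn (f ∘ φ) (U ∩ φ ⁻¹' V)

/-- Horizontally weakly conformal on `U`: there is `λ : U → [0,∞)` with
`⟪∇φ^α, ∇φ^β⟫ = λ² δ_{αβ}` pointwise on `U`. -/
def IsHWC {m n : ℕ} (φ : E m → E n) (U : Set (E m)) : Prop :=
  ∃ lam : E m → ℝ, (∀ x, 0 ≤ lam x) ∧
    ∀ x ∈ U, ∀ α β : Fin n,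
      ⟪gradient (fun y => φ y α) x, gradient (fun y => φ y β) x⟫ =
        (lam x) ^ 2 * (if α = β then 1 else 0)

/-- The Euclidean Laplacian of a real-valued function on `ℂ ≅ ℝ²`. -/
noncomputable def lapPlane (f : ℂ → ℝ) (z : ℂ) : ℝ :=
  fderiv ℝ (fun w => fderiv ℝ f w 1) z 1 +
    fderiv ℝ (fun w => fderiv ℝ f w Complex.I) z Complex.I

/-!
Locally a harmonic function on the plane is the real part of a holomorphic function, so `φ` is a
generalized harmonic morphism if and only if `Δ (Δ (F ∘ φ)) = 0` for all holomorphic `F`. The chain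
rule writes `Δ (Δ (F ∘ φ))` as a combination of the first four derivatives of `F` at `φ x`, with
coefficients depending on `φ` alone. The coefficient of the fourth derivative is `(∇φ · ∇φ) ^ 2`,
which `F z = (z - φ x) ^ 4` isolates. Once `∇φ · ∇φ` vanishes identically, only the coefficients of
the first two derivatives survive, and `F z = z` and `F z = z ^ 2` determine them.
-/

open Filter Topology InnerProductSpace Laplacian
open scoped ContDiff

section DirectionalDerivatives

variable {X : Type*} [NormedAddCommGroup X] [NormedSpace ℝ X] {x : X}

lemma fderiv_fderiv_apply {Y : Type*} [NormedAddCommGroup Y] [NormedSpace ℝ Y] {f : X → Y}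
    (hf : ContDiffAt ℝ 2 f x) (v w : X) :
    fderiv ℝ (fun y => fderiv ℝ f y v) x w = fderiv ℝ (fderiv ℝ f) x w v := by
  have hdiff : DifferentiableAt ℝ (fderiv ℝ f) x :=
    (hf.fderiv_right (m := 1) (by norm_num)).differentiableAt (by simp)
  rw [fderiv_clm_apply hdiff (by fun_prop)]
  simp

lemma differentiableAt_fderiv_apply {Y : Type*} [NormedAddCommGroup Y] [NormedSpace ℝ Y]
    {f : X → Y} (hf : ContDiffAt ℝ 2 f x) (v : X) :
    DifferentiableAt ℝ (fun y => fderiv ℝ f y v) x :=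
  ((hf.fderiv_right (m := 1) (by norm_num)).differentiableAt (by simp)).clm_apply (by fun_prop)

lemma fderiv_fderiv_mul_apply {A : Type*} [NormedRing A] [NormedAlgebra ℝ A] {f g : X → A}
    (hf : ContDiffAt ℝ 2 f x) (hg : ContDiffAt ℝ 2 g x) (v : X) :
    fderiv ℝ (fun y => fderiv ℝ (f * g) y v) x v =
      fderiv ℝ (fun y => fderiv ℝ f y v) x v * g x + 2 * (fderiv ℝ f x v * fderiv ℝ g x v) +
        f x * fderiv ℝ (fun y => fderiv ℝ g y v) x v := by
  have hfst : (fun y => fderiv ℝ (f * g) y v) =ᶠ[𝓝 x]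
      fun y => f y * fderiv ℝ g y v + fderiv ℝ f y v * g y := by
    filter_upwards [hf.eventually (by simp), hg.eventually (by simp)] with y hfy hgy
    rw [fderiv_mul' (hfy.differentiableAt (by simp)) (hgy.differentiableAt (by simp))]
    simp
  have df := hf.differentiableAt (by simp)
  have dg := hg.differentiableAt (by simp)
  have df' := differentiableAt_fderiv_apply hf v
  have dg' := differentiableAt_fderiv_apply hg v
  rw [hfst.fderiv_eq, fderiv_fun_add (df.fun_mul dg') (df'.fun_mul dg), fderiv_fun_mul' df dg',
    fderiv_fun_mul' df' dg]
  simp only [add_apply, smul_apply, smul_eq_mul, MulOpposite.smul_eq_mul_unop,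
    MulOpposite.unop_op]
  noncomm_ring

variable {𝕜 : Type*} [NontriviallyNormedField 𝕜] [NormedAlgebra ℝ 𝕜] {φ : X → 𝕜} {F : 𝕜 → 𝕜}

lemma fderiv_comp_apply_eq_deriv_mul (hF : DifferentiableAt 𝕜 F (φ x))
    (hφ : DifferentiableAt ℝ φ x) (v : X) :
    fderiv ℝ (F ∘ φ) x v = deriv F (φ x) * fderiv ℝ φ x v := by
  rw [(hF.hasDerivAt.comp_hasFDerivAt x hφ.hasFDerivAt).fderiv]
  simp

lemma contDiffAt_comp_restrictScalars {n : WithTop ℕ∞} (hF : ContDiffAt 𝕜 n F (φ x))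
    (hφ : ContDiffAt ℝ n φ x) : ContDiffAt ℝ n (F ∘ φ) x :=
  (hF.restrict_scalars ℝ).comp x hφ

lemma fderiv_fderiv_comp_apply (hF : ContDiffAt 𝕜 2 F (φ x)) (hφ : ContDiffAt ℝ 2 φ x) (v : X) :
    fderiv ℝ (fun y => fderiv ℝ (F ∘ φ) y v) x v =
      deriv^[2] F (φ x) * (fderiv ℝ φ x v * fderiv ℝ φ x v) +
        deriv F (φ x) * fderiv ℝ (fun y => fderiv ℝ φ y v) x v := by
  have hfst : (fun y => fderiv ℝ (F ∘ φ) y v) =ᶠ[𝓝 x]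
      fun y => (deriv F ∘ φ) y * fderiv ℝ φ y v := by
    filter_upwards [hφ.eventually (by simp),
      hφ.continuousAt.eventually (hF.eventually (by simp))] with y hφy hFy
    exact fderiv_comp_apply_eq_deriv_mul (hFy.differentiableAt (by simp))
      (hφy.differentiableAt (by simp)) _
  have hF' : ContDiffAt 𝕜 1 (deriv F) (φ x) := hF.derivWithin (by norm_num)
  have dφ : DifferentiableAt ℝ φ x := hφ.differentiableAt (by simp)
  have dFφ : DifferentiableAt ℝ (deriv F ∘ φ) x :=
    (contDiffAt_comp_restrictScalars hF' (hφ.of_le (by norm_num))).differentiableAt (by simp)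
  rw [hfst.fderiv_eq, fderiv_fun_mul dFφ (differentiableAt_fderiv_apply hφ v)]
  simp only [add_apply, smul_apply, smul_eq_mul, Function.comp_apply, Function.iterate_succ,
    Function.iterate_zero, id_eq,
    fderiv_comp_apply_eq_deriv_mul (hF'.differentiableAt (by simp)) dφ]
  ring

end DirectionalDerivatives

section Laplacian

variable {X : Type*} [NormedAddCommGroup X] [InnerProductSpace ℝ X] [FiniteDimensional ℝ X]
  {Y : Type*} [NormedAddCommGroup Y] [NormedSpace ℝ Y] {ι : Type*} [Fintype ι] {x : X}

lemma laplacian_eq_sum_fderiv_fderiv (b : OrthonormalBasis ι ℝ X) {f : X → Y}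
    (hf : ContDiffAt ℝ 2 f x) :
    Δ f x = ∑ i, fderiv ℝ (fun y => fderiv ℝ f y (b i)) x (b i) := by
  simp [laplacian_eq_iteratedFDeriv_orthonormalBasis f b, iteratedFDeriv_two_apply,
    fderiv_fderiv_apply hf]

lemma contDiffAt_laplacian {f : X → Y} {m n : WithTop ℕ∞} (hf : ContDiffAt ℝ n f x)
    (hmn : m + 2 ≤ n) : ContDiffAt ℝ m (Δ f) x := by
  rw [laplacian_eq_iteratedFDeriv_stdOrthonormalBasis]
  have hiter := hf.iteratedFDeriv_right (i := 2) hmn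
  exact ContDiffAt.sum fun i _ =>
    (ContinuousMultilinearMap.apply ℝ (fun _ : Fin 2 => X) Y _).contDiff.contDiffAt.comp x hiter

lemma laplacian_laplacian_eq_sum_fderiv (b : OrthonormalBasis ι ℝ X) {f : X → Y}
    (hf : ContDiffAt ℝ 4 f x) :
    Δ (Δ f) x = ∑ i, fderiv ℝ (fun y => fderiv ℝ
      (fun z => ∑ j, fderiv ℝ (fun w => fderiv ℝ f w (b j)) z (b j)) y (b i)) x (b i) := by
  have hsum : Δ f =ᶠ[𝓝 x] fun z => ∑ j, fderiv ℝ (fun w => fderiv ℝ f w (b j)) z (b j) := by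
    filter_upwards [hf.eventually (by simp)] with z hz
    exact laplacian_eq_sum_fderiv_fderiv b (hz.of_le (by norm_num))
  rw [(laplacian_congr_nhds hsum).eq_of_nhds]
  exact laplacian_eq_sum_fderiv_fderiv b
    ((contDiffAt_laplacian hf (by norm_num)).congr_of_eventuallyEq hsum.symm)

lemma laplacian_laplacian_clm_comp {Z : Type*} [NormedAddCommGroup Z] [NormedSpace ℝ Z]
    (L : Y →L[ℝ] Z) {f : X → Y} (hf : ContDiffAt ℝ 4 f x) :
    Δ (Δ (L ∘ f)) x = L (Δ (Δ f) x) := by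
  rw [(laplacian_congr_nhds
    (hf.of_le (by norm_num)).laplacian_CLM_comp_left_nhds).eq_of_nhds]
  exact (contDiffAt_laplacian hf (by norm_num)).laplacian_CLM_comp_left

end Laplacian

section GradMul

variable {X : Type*} [NormedAddCommGroup X] [InnerProductSpace ℝ X]
  {A : Type*} [NormedRing A] [NormedAlgebra ℝ A]
  {ι : Type*} [Fintype ι] (b : OrthonormalBasis ι ℝ X) {x : X}

/-- The product `∇f · ∇g = ∑ᵢ ∂ᵢf ∂ᵢg` of the gradients of two algebra-valued functions in an
orthonormal basis. It is bilinear over the algebra: no conjugation occurs for `A = ℂ`, so that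
`gradMul b φ φ = 0` expresses horizontal weak conformality of `φ : X → ℂ`. -/
def gradMul (f g : X → A) (x : X) : A :=
  ∑ i, fderiv ℝ f x (b i) * fderiv ℝ g x (b i)

lemma contDiffAt_gradMul {f g : X → A} {m n : WithTop ℕ∞} (hf : ContDiffAt ℝ n f x)
    (hg : ContDiffAt ℝ n g x) (hmn : m + 1 ≤ n) : ContDiffAt ℝ m (gradMul b f g) x :=
  ContDiffAt.sum fun _ _ => ((hf.fderiv_right hmn).clm_apply contDiffAt_const).mul
    ((hg.fderiv_right hmn).clm_apply contDiffAt_const)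

lemma gradMul_eq_zero_of_eventuallyEq_zero (f : X → A) {g : X → A} (hg : g =ᶠ[𝓝 x] 0) :
    gradMul b f g x = 0 := by
  simp [gradMul, hg.fderiv_eq]

lemma gradMul_comp_left {𝕜 : Type*} [NontriviallyNormedField 𝕜] [NormedAlgebra ℝ 𝕜] {φ : X → 𝕜}
    {F : 𝕜 → 𝕜} (hF : DifferentiableAt 𝕜 F (φ x)) (hφ : DifferentiableAt ℝ φ x) (g : X → 𝕜) :
    gradMul b (F ∘ φ) g x = deriv F (φ x) * gradMul b φ g x := by
  simp only [gradMul, fderiv_comp_apply_eq_deriv_mul hF hφ, Finset.mul_sum, mul_assoc]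

lemma laplacian_mul [FiniteDimensional ℝ X] {f g : X → A} (hf : ContDiffAt ℝ 2 f x)
    (hg : ContDiffAt ℝ 2 g x) :
    Δ (f * g) x = Δ f x * g x + 2 * gradMul b f g x + f x * Δ g x := by
  have hfg : ContDiffAt ℝ 2 (f * g) x := hf.mul hg
  simp only [laplacian_eq_sum_fderiv_fderiv b, hfg, hf, hg, gradMul, fderiv_fderiv_mul_apply,
    Finset.sum_add_distrib, Finset.mul_sum, Finset.sum_mul]

end GradMul

section ChainRule

variable {X : Type*} [NormedAddCommGroup X] [InnerProductSpace ℝ X] [FiniteDimensional ℝ X]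
  {𝕜 : Type*} [NontriviallyNormedField 𝕜] [NormedAlgebra ℝ 𝕜]
  {ι : Type*} [Fintype ι] (b : OrthonormalBasis ι ℝ X) {φ : X → 𝕜} {F : 𝕜 → 𝕜} {x : X}

theorem laplacian_comp (hF : ContDiffAt 𝕜 2 F (φ x)) (hφ : ContDiffAt ℝ 2 φ x) :
    Δ (F ∘ φ) x = deriv^[2] F (φ x) * gradMul b φ φ x + deriv F (φ x) * Δ φ x := by
  have hFφ := contDiffAt_comp_restrictScalars hF hφ
  simp only [laplacian_eq_sum_fderiv_fderiv b, hFφ, hφ, fderiv_fderiv_comp_apply hF hφ, gradMul,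
    Finset.sum_add_distrib, Finset.mul_sum]

theorem laplacian_laplacian_comp (hF : ContDiffAt 𝕜 4 F (φ x)) (hφ : ContDiffAt ℝ 4 φ x) :
    Δ (Δ (F ∘ φ)) x =
      deriv F (φ x) * Δ (Δ φ) x +
      deriv^[2] F (φ x) * (2 * gradMul b φ (Δ φ) x + Δ φ x ^ 2 + Δ (gradMul b φ φ) x) +
      deriv^[3] F (φ x) * (2 * gradMul b φ φ x * Δ φ x + 2 * gradMul b φ (gradMul b φ φ) x) +
      deriv^[4] F (φ x) * gradMul b φ φ x ^ 2 := by
  have hF₁ : ContDiffAt 𝕜 2 (deriv F) (φ x) := hF.derivWithin (by norm_num)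
  have hF₂ : ContDiffAt 𝕜 2 (deriv^[2] F) (φ x) :=
    (hF.derivWithin (m := 3) (by norm_num)).derivWithin (by norm_num)
  have hφ₂ : ContDiffAt ℝ 2 φ x := hφ.of_le (by norm_num)
  have hlap : Δ (F ∘ φ) =ᶠ[𝓝 x]
      (deriv^[2] F ∘ φ) * gradMul b φ φ + (deriv F ∘ φ) * Δ φ := by
    filter_upwards [hφ.eventually (by simp),
      hφ.continuousAt.eventually (hF.eventually (by simp))] with y hφy hFy
    exact laplacian_comp b (hFy.of_le (by norm_num)) (hφy.of_le (by norm_num))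
  have hgrad : ContDiffAt ℝ 2 (gradMul b φ φ) x := contDiffAt_gradMul b hφ hφ (by norm_num)
  have hΔφ : ContDiffAt ℝ 2 (Δ φ) x := contDiffAt_laplacian hφ (by norm_num)
  have hF₁φ := contDiffAt_comp_restrictScalars hF₁ hφ₂
  have hF₂φ := contDiffAt_comp_restrictScalars hF₂ hφ₂
  have hmul₂ : ContDiffAt ℝ 2 ((deriv^[2] F ∘ φ) * gradMul b φ φ) x := hF₂φ.mul hgrad
  have hmul₁ : ContDiffAt ℝ 2 ((deriv F ∘ φ) * Δ φ) x := hF₁φ.mul hΔφ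
  have dF₁ := hF₁.differentiableAt (by simp)
  have dF₂ := hF₂.differentiableAt (by simp)
  have dφ := hφ.differentiableAt (by simp)
  rw [(laplacian_congr_nhds hlap).eq_of_nhds, hmul₂.laplacian_add hmul₁,
    laplacian_mul b hF₂φ hgrad, laplacian_mul b hF₁φ hΔφ, laplacian_comp b hF₁ hφ₂,
    laplacian_comp b hF₂ hφ₂, gradMul_comp_left b dF₁ dφ, gradMul_comp_left b dF₂ dφ]
  simp only [Function.comp_apply, Function.iterate_succ, Function.iterate_zero, id_eq]
  ring

theorem laplacian_laplacian_comp_of_gradMul_eq_zero (hF : ContDiffAt 𝕜 4 F (φ x))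
    (hφ : ContDiffAt ℝ 4 φ x) (hconf : gradMul b φ φ =ᶠ[𝓝 x] 0) :
    Δ (Δ (F ∘ φ)) x = deriv F (φ x) * Δ (Δ φ) x +
      deriv^[2] F (φ x) * (2 * gradMul b φ (Δ φ) x + Δ φ x ^ 2) := by
  have hlap : Δ (gradMul b φ φ) x = 0 := by
    rw [(laplacian_congr_nhds hconf).eq_of_nhds]
    exact congrFun laplacian_const x
  rw [laplacian_laplacian_comp b hF hφ, hlap, gradMul_eq_zero_of_eventuallyEq_zero b φ hconf,
    hconf.eq_of_nhds]
  simp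

end ChainRule

section GeneralizedHarmonicMorphism

variable {X : Type*} [NormedAddCommGroup X] [InnerProductSpace ℝ X] [FiniteDimensional ℝ X]
  {ι : Type*} [Fintype ι] (b : OrthonormalBasis ι ℝ X) {φ : X → ℂ} {x : X}

/-- `φ` is a generalized harmonic morphism at `x`: it pulls back functions harmonic near `φ x`
to functions whose bilaplacian vanishes at `x`. Imposed at every point of an open set, this is the
notion of generalized harmonic morphism on that set. -/
def IsGHMAt (φ : X → ℂ) (x : X) : Prop :=
  ∀ f : ℂ → ℝ, HarmonicAt f (φ x) → Δ (Δ (f ∘ φ)) x = 0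

lemma exists_analyticAt_re_eventuallyEq {f : ℂ → ℝ} {z : ℂ} (hf : HarmonicAt f z) :
    ∃ F : ℂ → ℂ, AnalyticAt ℂ F z ∧ f =ᶠ[𝓝 z] Complex.reCLM ∘ F := by
  obtain ⟨r, hr, hball⟩ := Metric.eventually_nhds_iff_ball.1 hf.eventually
  obtain ⟨F, hF, hre⟩ := HarmonicOnNhd.exists_analyticOnNhd_ball_re_eq hball
  exact ⟨F, hF z (Metric.mem_ball_self hr),
    hre.symm.eventuallyEq_of_mem (Metric.ball_mem_nhds z hr)⟩

theorem isGHMAt_iff_forall_analyticAt (hφ : ContDiffAt ℝ 4 φ x) :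
    IsGHMAt φ x ↔ ∀ F : ℂ → ℂ, AnalyticAt ℂ F (φ x) → Δ (Δ (F ∘ φ)) x = 0 := by
  have hFφ {F : ℂ → ℂ} (hF : AnalyticAt ℂ F (φ x)) : ContDiffAt ℝ 4 (F ∘ φ) x :=
    contDiffAt_comp_restrictScalars hF.contDiffAt hφ
  constructor
  · intro h F hF
    have hpart (L : ℂ →L[ℝ] ℝ) : L (Δ (Δ (F ∘ φ)) x) = 0 := by
      rw [← laplacian_laplacian_clm_comp L (hFφ hF), ← Function.comp_assoc]
      exact h _ (hF.harmonicAt.comp_CLM L)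
    exact Complex.ext (hpart Complex.reCLM) (hpart Complex.imCLM)
  · intro h f hf
    obtain ⟨F, hF, hre⟩ := exists_analyticAt_re_eventuallyEq hf
    have hcomp : f ∘ φ =ᶠ[𝓝 x] Complex.reCLM ∘ (F ∘ φ) := hφ.continuousAt.eventually hre
    rw [(laplacian_congr_nhds (laplacian_congr_nhds hcomp)).eq_of_nhds,
      laplacian_laplacian_clm_comp _ (hFφ hF), h F hF, map_zero]

lemma iterate_deriv_sub_const_pow_apply_self (c : ℂ) (k n : ℕ) :
    deriv^[k] (fun z => (z - c) ^ n) c = if k = n then (n.factorial : ℂ) else 0 := by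
  rw [← iteratedDeriv_eq_iterate, iteratedDeriv_comp_sub_const (f := fun z => z ^ n)]
  simp only [sub_self, iteratedDeriv_fun_pow_zero, Nat.cast_ite, Nat.cast_zero]

theorem IsGHMAt.gradMul_self_eq_zero (h : IsGHMAt φ x) (hφ : ContDiffAt ℝ 4 φ x) :
    gradMul b φ φ x = 0 := by
  have hquartic := (isGHMAt_iff_forall_analyticAt hφ).1 h (fun z => (z - φ x) ^ 4) (by fun_prop)
  rw [laplacian_laplacian_comp b (by fun_prop) hφ, ← Function.iterate_one deriv] at hquartic
  simpa [iterate_deriv_sub_const_pow_apply_self, Nat.factorial_ne_zero] using hquartic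

theorem laplacian_laplacian_comp_eq_zero_of_sq (hφ : ContDiffAt ℝ 4 φ x)
    (hconf : gradMul b φ φ =ᶠ[𝓝 x] 0) (hbi : Δ (Δ φ) x = 0) (hsq : Δ (Δ (φ ^ 2)) x = 0)
    {F : ℂ → ℂ} (hF : AnalyticAt ℂ F (φ x)) : Δ (Δ (F ∘ φ)) x = 0 := by
  have hcoeff : 2 * gradMul b φ (Δ φ) x + Δ φ x ^ 2 = 0 := by
    have hformula := laplacian_laplacian_comp_of_gradMul_eq_zero b (F := fun z => z ^ 2)
      (by fun_prop) hφ hconf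
    rw [show (fun z : ℂ => z ^ 2) ∘ φ = φ ^ 2 from rfl, hsq, hbi, iter_deriv_pow] at hformula
    norm_num [Finset.prod_range_succ] at hformula
    exact hformula
  rw [laplacian_laplacian_comp_of_gradMul_eq_zero b hF.contDiffAt hφ hconf, hbi, hcoeff]
  simp

theorem stmt_8_general {U : Set X} (hU : IsOpen U) (hφ : ContDiffOn ℝ 4 φ U) :
    (∀ x ∈ U, IsGHMAt φ x) ↔
      (∀ x ∈ U, gradMul b φ φ x = 0) ∧
        (∀ x ∈ U, Δ (Δ φ) x = 0) ∧ ∀ x ∈ U, Δ (Δ (φ ^ 2)) x = 0 := by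
  have hφAt {x} (hx : x ∈ U) : ContDiffAt ℝ 4 φ x := hφ.contDiffAt (hU.mem_nhds hx)
  constructor
  · intro h
    have hcomp {x} (hx : x ∈ U) := (isGHMAt_iff_forall_analyticAt (hφAt hx)).1 (h x hx)
    refine ⟨fun x hx => (h x hx).gradMul_self_eq_zero b (hφAt hx), fun x hx => ?_, fun x hx => ?_⟩
    · simpa only [Function.id_comp] using hcomp hx id analyticAt_id
    · rw [show φ ^ 2 = (fun z : ℂ => z ^ 2) ∘ φ from rfl]
      exact hcomp hx _ (by fun_prop)
  · rintro ⟨hconf, hbi, hsq⟩ x hx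
    exact (isGHMAt_iff_forall_analyticAt (hφAt hx)).2 fun F hF =>
      laplacian_laplacian_comp_eq_zero_of_sq b (hφAt hx)
        (eventually_of_mem (hU.mem_nhds hx) hconf) (hbi x hx) (hsq x hx) hF

end GeneralizedHarmonicMorphism

section Coordinates

variable {m : ℕ} {x : E m}

lemma lap_lap_eq_laplacian_laplacian {f : E m → ℝ} (hf : ContDiffAt ℝ 4 f x) :
    lap (lap f) x = Δ (Δ f) x := by
  rw [laplacian_laplacian_eq_sum_fderiv (EuclideanSpace.basisFun (Fin m) ℝ) hf]
  simp only [EuclideanSpace.basisFun_apply]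
  rfl

lemma lapC_lapC_eq_laplacian_laplacian {f : E m → ℂ} (hf : ContDiffAt ℝ 4 f x) :
    lapC (lapC f) x = Δ (Δ f) x := by
  rw [laplacian_laplacian_eq_sum_fderiv (EuclideanSpace.basisFun (Fin m) ℝ) hf]
  simp only [EuclideanSpace.basisFun_apply]
  rfl

lemma lapPlane_eq_laplacian {f : ℂ → ℝ} {z : ℂ} (hf : ContDiffAt ℝ 2 f z) :
    lapPlane f z = Δ f z := by
  simp [lapPlane, laplacian_eq_sum_fderiv_fderiv Complex.orthonormalBasisOneI hf]

lemma harmonicOnNhd_iff_lapPlane {f : ℂ → ℝ} {V : Set ℂ} (hV : IsOpen V) :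
    HarmonicOnNhd f V ↔ ContDiffOn ℝ ∞ f V ∧ ∀ z ∈ V, lapPlane f z = 0 := by
  constructor
  · exact fun h => ⟨fun z hz => (HarmonicAt.analyticAt (h z hz)).contDiffAt.contDiffWithinAt,
      fun z hz => (lapPlane_eq_laplacian (h z hz).1).trans (h z hz).2.eq_of_nhds⟩
  · rintro ⟨hf, hlap⟩ z hz
    have hfAt {w} (hw : w ∈ V) : ContDiffAt ℝ 2 f w :=
      (contDiffOn_infty.1 hf 2).contDiffAt (hV.mem_nhds hw)
    refine ⟨hfAt hz, eventually_of_mem (hV.mem_nhds hz) fun w hw => ?_⟩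
    exact (lapPlane_eq_laplacian (hfAt hw)).symm.trans (hlap w hw)

theorem forall_isGHMAt_iff_lap {U : Set (E m)} (hU : IsOpen U) {φ : E m → ℂ}
    (hφ : ContDiffOn ℝ 4 φ U) :
    (∀ x ∈ U, IsGHMAt φ x) ↔ ∀ V : Set ℂ, IsOpen V → ∀ f : ℂ → ℝ,
      (ContDiffOn ℝ ∞ f V ∧ ∀ z ∈ V, lapPlane f z = 0) →
      ∀ x ∈ U ∩ φ ⁻¹' V, lap (lap (fun y => f (φ y))) x = 0 := by
  have hlap {x} (hx : x ∈ U) {f : ℂ → ℝ} (hf : HarmonicAt f (φ x)) :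
      lap (lap (fun y => f (φ y))) x = Δ (Δ (f ∘ φ)) x :=
    lap_lap_eq_laplacian_laplacian
      ((HarmonicAt.analyticAt hf).contDiffAt.comp x (hφ.contDiffAt (hU.mem_nhds hx)))
  constructor
  · rintro h V hV f hf x ⟨hxU, hxV⟩
    have hharm := (harmonicOnNhd_iff_lapPlane hV).2 hf (φ x) hxV
    rw [hlap hxU hharm, h x hxU f hharm]
  · intro h x hx f hf
    have hopen := isOpen_setOfPred_harmonicAt f
    have hzero := h _ hopen f ((harmonicOnNhd_iff_lapPlane hopen).1 fun _ hz => hz) x ⟨hx, hf⟩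
    rwa [hlap hx hf] at hzero

end Coordinates

/-- a smooth map `φ : U → ℂ` on an open `U ⊆ ℝ³` is a generalized
harmonic morphism (it pulls back every harmonic function on an open `V ⊆ ℂ ≅ ℝ²` to a
biharmonic function on `φ⁻¹(V)`) if and only if it is horizontally weakly conformal
(`Σᵢ (∂φ/∂xᵢ)² = 0` on `U`) and both `φ` and `φ²` are biharmonic. -/
theorem stmt_8 (U : Set (E 3)) (hU : IsOpen U)
    (φ : E 3 → ℂ) (hφ : ContDiffOn ℝ (⊤ : ℕ∞) φ U) :
    (∀ V : Set ℂ, IsOpen V → ∀ f : ℂ → ℝ,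
        (ContDiffOn ℝ (⊤ : ℕ∞) f V ∧ ∀ z ∈ V, lapPlane f z = 0) →
        ∀ x ∈ U ∩ φ ⁻¹' V, lap (lap (fun y => f (φ y))) x = 0) ↔
      ((∀ x ∈ U, ∑ i : Fin 3, (fderiv ℝ φ x (EuclideanSpace.single i 1)) ^ 2 = 0) ∧
        (∀ x ∈ U, lapC (lapC φ) x = 0) ∧
        (∀ x ∈ U, lapC (lapC (fun y => (φ y) ^ 2)) x = 0)) := by
  have hφ₄ : ContDiffOn ℝ 4 φ U := contDiffOn_infty.1 hφ 4
  have hφAt {x} (hx : x ∈ U) : ContDiffAt ℝ 4 φ x := hφ₄.contDiffAt (hU.mem_nhds hx)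
  rw [← forall_isGHMAt_iff_lap hU hφ₄,
    stmt_8_general (EuclideanSpace.basisFun (Fin 3) ℝ) hU hφ₄]
  refine and_congr ?_ (and_congr ?_ ?_) <;> refine forall₂_congr fun x hx => ?_
  · simp only [gradMul, EuclideanSpace.basisFun_apply, sq]
  · rw [lapC_lapC_eq_laplacian_laplacian (hφAt hx)]
  · rw [lapC_lapC_eq_laplacian_laplacian ((hφAt hx).pow 2)]
    rfl
end
end

section
/- Let φ = (φ^1, φ^2) : ℝ³ → ℝ² be a smooth Riemannian submersion, i.e. at every point of ℝ³ the gradients ∇φ^1 and ∇φ^2 are orthonormal. If φ pulls back every harmonic function to a biharmonic function (i.e. for every open V ⊆ ℝ² and every harmonic f : V → ℝ, f ∘ φ is biharmonic on φ^{-1}(V)), then φ is an orthogonal projection up to isometries: there exist a Euclidean isometry σ : ℝ³ → ℝ³ and a Euclidean isometry τ : ℝ² → ℝ² such that (τ ∘ φ ∘ σ)(x, y, z) = (x, y) for all (x, y, z) ∈ ℝ³. -/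
/-!
A differentiable function `u` with `‖∇u‖ = 1` everywhere is affine. Indeed `u` is `1`-Lipschitz, and
a maximum principle shows that it attains the extreme values `u x ± r` allowed by this bound on
every sphere of radius `r` about `x`. By strict convexity these extremal points all lie on one
line, along which `u` grows at unit speed, and a `1`-Lipschitz function with such a line is affine.
Hence a Riemannian submersion between Euclidean spaces is an affine map with orthonormal component
gradients, which become coordinate vectors after completing them to an orthonormal basis.
-/

open scoped BigOperators RealInnerProductSpace

noncomputable section

open Filter Metric Set
open scoped Topology

section MaximumPrinciple

variable {F : Type*} [NormedAddCommGroup F] [NormedSpace ℝ F] {u : F → ℝ} {x : F}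

theorem norm_fderiv_le_of_eventually_sub_le {c : ℝ} (hc : 0 ≤ c) (hu : DifferentiableAt ℝ u x)
    (hle : ∀ᶠ y in 𝓝 x, u y - u x ≤ c * ‖y - x‖) : ‖fderiv ℝ u x‖ ≤ c := by
  have fderiv_apply_le (v : F) : fderiv ℝ u x v ≤ c * ‖v‖ := by
    refine le_of_tendsto (hu.hasFDerivAt.lim_real v) ?_
    have tendsto_base : Tendsto (fun t : ℝ => x + t⁻¹ • v) atTop (𝓝 x) := by
      simpa using ((tendsto_inv_atTop_zero (𝕜 := ℝ)).smul_const v).const_add x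
    filter_upwards [tendsto_base.eventually hle, eventually_gt_atTop 0] with t ht htpos
    calc t • (u (x + t⁻¹ • v) - u x)
        ≤ t * (c * ‖x + t⁻¹ • v - x‖) := mul_le_mul_of_nonneg_left ht htpos.le
      _ = c * ‖v‖ := by
        rw [add_sub_cancel_left, norm_smul, Real.norm_of_nonneg (inv_nonneg.2 htpos.le)]
        field_simp
  refine ContinuousLinearMap.opNorm_le_bound _ hc fun v => abs_le'.2 ⟨fderiv_apply_le v, ?_⟩
  simpa using fderiv_apply_le (-v)

variable [ProperSpace F]

theorem exists_mem_sphere_add_mul_le_of_lt_norm_fderiv {c r : ℝ} (hc : 0 ≤ c) (hr : 0 ≤ r)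
    (hu : Differentiable ℝ u) (hlt : ∀ z, c < ‖fderiv ℝ u z‖) :
    ∃ y ∈ sphere x r, u x + c * r ≤ u y := by
  have hcont : Continuous fun y => u y - c * ‖y - x‖ := by
    have := hu.continuous
    fun_prop
  obtain ⟨y, hy, hmax⟩ := (isCompact_closedBall x r).exists_isMaxOn
    (nonempty_closedBall.2 hr) hcont.continuousOn
  have hyr : y ∈ sphere x r := by
    by_contra hy'
    have hball : y ∈ ball x r := lt_of_le_of_ne hy hy'
    refine (hlt y).not_ge (norm_fderiv_le_of_eventually_sub_le hc (hu y) ?_)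
    filter_upwards [closedBall_mem_nhds_of_mem hball] with w hw
    have hwy : u w - c * ‖w - x‖ ≤ u y - c * ‖y - x‖ := hmax hw
    have htri := mul_le_mul_of_nonneg_left (norm_sub_le_norm_sub_add_norm_sub w y x) hc
    linarith
  have hxy : u x - c * ‖x - x‖ ≤ u y - c * ‖y - x‖ := hmax (mem_closedBall_self hr)
  rw [sub_self, norm_zero, mem_sphere_iff_norm.1 hyr] at hxy
  exact ⟨y, hyr, by linarith⟩

theorem exists_mem_sphere_add_mul_le_of_le_norm_fderiv {c r : ℝ} (hc : 0 < c) (hr : 0 ≤ r)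
    (hu : Differentiable ℝ u) (hle : ∀ z, c ≤ ‖fderiv ℝ u z‖) :
    ∃ y ∈ sphere x r, u x + c * r ≤ u y := by
  have below {b : ℝ} (hb : b ∈ Ioo 0 c) : ∃ y ∈ sphere x r, u x + b * r ≤ u y :=
    exists_mem_sphere_add_mul_le_of_lt_norm_fderiv hb.1.le hr hu fun z => hb.2.trans_le (hle z)
  obtain ⟨b, hb⟩ := nonempty_Ioo.2 hc
  obtain ⟨y₀, hy₀, -⟩ := below hb
  obtain ⟨y, hy, hmax⟩ := (isCompact_sphere x r).exists_isMaxOn ⟨y₀, hy₀⟩ hu.continuous.continuousOn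
  have htendsto : Tendsto (fun b => u x + b * r) (𝓝[<] c) (𝓝 (u x + c * r)) :=
    (Continuous.tendsto (by fun_prop) c).mono_left nhdsWithin_le_nhds
  refine ⟨y, hy, le_of_tendsto htendsto ?_⟩
  filter_upwards [Ioo_mem_nhdsLT hc] with b hb
  obtain ⟨w, hw, hbw⟩ := below hb
  exact hbw.trans (hmax hw)

end MaximumPrinciple

section UnitSpeedLine

variable {F : Type*} [NormedAddCommGroup F] [NormedSpace ℝ F] [StrictConvexSpace ℝ F]
  {u : F → ℝ} {x : F}

theorem sameRay_sub_of_add_norm_le {y z : F} (hu : LipschitzWith 1 u)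
    (hy : u x + ‖y - x‖ ≤ u y) (hz : u z + ‖x - z‖ ≤ u x) : SameRay ℝ (y - x) (x - z) := by
  refine sameRay_iff_norm_add.2 (le_antisymm (norm_add_le _ _) ?_)
  have hyz : u y - u z ≤ ‖y - z‖ := (le_abs_self _).trans (by simpa using hu.norm_sub_le y z)
  rw [sub_add_sub_cancel]
  linarith

theorem exists_unit_forall_apply_add_smul_eq (hu : LipschitzWith 1 u)
    (hup : ∀ r, 0 ≤ r → ∃ y ∈ sphere x r, u x + r ≤ u y)
    (hdown : ∀ r, 0 ≤ r → ∃ z ∈ sphere x r, u z + r ≤ u x) :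
    ∃ e : F, ‖e‖ = 1 ∧ ∀ t : ℝ, u (x + t • e) = u x + t := by
  simp only [mem_sphere_iff_norm] at hup hdown
  obtain ⟨a, ha, hua⟩ := hup 1 zero_le_one
  obtain ⟨b, hb, hub⟩ := hdown 1 zero_le_one
  rw [norm_sub_rev] at hb
  have hab : a - x = x - b := by
    have hray := (sameRay_sub_of_add_norm_le hu (ha.symm ▸ hua) (hb.symm ▸ hub)).norm_smul_eq
    rwa [ha, hb, one_smul, one_smul, eq_comm] at hray
  refine ⟨a - x, ha, fun t => ?_⟩
  have hlip : |u (x + t • (a - x)) - u x| ≤ |t| := by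
    simpa [norm_smul, ha] using hu.norm_sub_le (x + t • (a - x)) x
  obtain ht | ht := le_total 0 t
  · obtain ⟨y, hy, huy⟩ := hup t ht
    have hray := (sameRay_sub_of_add_norm_le hu (hy.symm ▸ huy) (hb.symm ▸ hub)).norm_smul_eq
    have hpoint : x + t • (a - x) = y := by
      rw [hy, hb, one_smul, ← hab] at hray
      rw [hray, add_sub_cancel]
    rw [hpoint, abs_of_nonneg ht] at hlip
    rw [hpoint]
    linarith [(abs_le.1 hlip).2]
  · obtain ⟨z, hz, huz⟩ := hdown (-t) (neg_nonneg.2 ht)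
    rw [norm_sub_rev] at hz
    have hray := (sameRay_sub_of_add_norm_le hu (ha.symm ▸ hua) (hz.symm ▸ huz)).norm_smul_eq
    have hpoint : x + t • (a - x) = z := by
      rw [ha, hz, one_smul, neg_smul] at hray
      rw [← neg_eq_iff_eq_neg.2 hray, neg_sub, add_sub_cancel]
    rw [hpoint, abs_of_nonpos ht] at hlip
    rw [hpoint]
    linarith [(abs_le.1 hlip).1]

end UnitSpeedLine

section InnerProduct

variable {F : Type*} [NormedAddCommGroup F] [InnerProductSpace ℝ F] {u : F → ℝ} {x : F}

theorem eq_add_inner_of_forall_apply_add_smul_eq {e : F} (hu : LipschitzWith 1 u) (he : ‖e‖ = 1)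
    (hline : ∀ t : ℝ, u (x + t • e) = u x + t) (y : F) : u y = u x + ⟪e, y - x⟫ := by
  set k := u y - u x - ⟪e, y - x⟫
  -- The Lipschitz bound between `y` and `x + t • e`, squared: the terms `t ^ 2` cancel.
  have hbound (t : ℝ) : (u y - u x) ^ 2 - 2 * t * k ≤ ‖y - x‖ ^ 2 := by
    have hlip : |u y - (u x + t)| ≤ ‖y - x - t • e‖ := by
      simpa [hline, sub_sub] using hu.norm_sub_le y (x + t • e)
    have hsq := pow_le_pow_left₀ (abs_nonneg _) hlip 2
    rw [sq_abs, norm_sub_sq_real, inner_smul_right, real_inner_comm, norm_smul, he, mul_one,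
      Real.norm_eq_abs, sq_abs] at hsq
    linarith
  have hk_zero : k = 0 := by
    by_contra hne
    have h := hbound (-(‖y - x‖ ^ 2 + 1) / (2 * k))
    have hcancel : 2 * (-(‖y - x‖ ^ 2 + 1) / (2 * k)) * k = -(‖y - x‖ ^ 2 + 1) := by field_simp
    rw [hcancel] at h
    linarith [sq_nonneg (u y - u x)]
  linarith

theorem norm_gradient [CompleteSpace F] : ‖gradient u x‖ = ‖fderiv ℝ u x‖ := by
  rw [← toDual_gradient, LinearIsometryEquiv.norm_map]

theorem eq_add_inner_gradient_of_norm_gradient_eq_one [ProperSpace F] (hu : Differentiable ℝ u)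
    (hgrad : ∀ z, ‖gradient u z‖ = 1) (x y : F) : u y = u x + ⟪gradient u x, y - x⟫ := by
  have hnorm (z : F) : ‖fderiv ℝ u z‖ = 1 := norm_gradient.symm.trans (hgrad z)
  have hlip : LipschitzWith 1 u := lipschitzWith_of_nnnorm_fderiv_le hu fun z => (hnorm z).le
  have hup (r : ℝ) (hr : 0 ≤ r) : ∃ y ∈ sphere x r, u x + r ≤ u y := by
    simpa using
      exists_mem_sphere_add_mul_le_of_le_norm_fderiv one_pos hr hu fun z => (hnorm z).ge
  have hdown (r : ℝ) (hr : 0 ≤ r) : ∃ y ∈ sphere x r, u y + r ≤ u x := by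
    have hneg (z : F) : 1 ≤ ‖fderiv ℝ (-u) z‖ := by rw [fderiv_neg, norm_neg, hnorm]
    obtain ⟨y, hy, hle⟩ :=
      exists_mem_sphere_add_mul_le_of_le_norm_fderiv (x := x) one_pos hr hu.neg hneg
    exact ⟨y, hy, by simp only [Pi.neg_apply] at hle; linarith⟩
  obtain ⟨e, he, hline⟩ := exists_unit_forall_apply_add_smul_eq hlip hup hdown
  have haffine := eq_add_inner_of_forall_apply_add_smul_eq hlip he hline
  have hderiv : HasGradientAt u e x := by
    rw [funext haffine, hasGradientAt_iff_hasFDerivAt]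
    exact ((innerSL ℝ e).hasFDerivAt.comp x ((hasFDerivAt_id x).sub_const x)).const_add (u x)
  rw [hderiv.gradient]
  exact haffine y

end InnerProduct

theorem exists_orthonormalBasis_apply_embedding_eq {𝕜 F ι κ : Type*} [RCLike 𝕜]
    [NormedAddCommGroup F] [InnerProductSpace 𝕜 F] [FiniteDimensional 𝕜 F] [Fintype ι]
    (hcard : Module.finrank 𝕜 F = Fintype.card ι) (j : κ ↪ ι) {v : κ → F} (hv : Orthonormal 𝕜 v) :
    ∃ b : OrthonormalBasis ι 𝕜 F, ∀ k, b (j k) = v k := by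
  have hrange : (range j).domRestrict (Function.extend j v 0) =
      v ∘ (Equiv.ofInjective j j.injective).symm := by
    ext ⟨_, k, rfl⟩
    simp [j.injective.extend_apply]
  have horth : Orthonormal 𝕜 ((range j).domRestrict (Function.extend j v 0)) :=
    hrange ▸ hv.comp _ (Equiv.injective _)
  obtain ⟨b, hb⟩ := horth.exists_orthonormalBasis_extension_of_card_eq hcard
  exact ⟨b, fun k => (hb _ (mem_range_self k)).trans (j.injective.extend_apply v 0 k)⟩

theorem orthonormal_fin_two_iff {𝕜 F : Type*} [RCLike 𝕜] [NormedAddCommGroup F]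
    [InnerProductSpace 𝕜 F] {v : Fin 2 → F} :
    Orthonormal 𝕜 v ↔
      inner 𝕜 (v 0) (v 0) = 1 ∧ inner 𝕜 (v 1) (v 1) = 1 ∧ inner 𝕜 (v 0) (v 1) = 0 := by
  rw [orthonormal_iff_ite]
  simp only [Fin.forall_fin_two, Fin.isValue, reduceIte, zero_ne_one, one_ne_zero]
  rw [inner_eq_zero_symm (x := v 1)]
  tauto

theorem stmt_9_general {m n : ℕ} (j : Fin n ↪ Fin m) {φ : E m → E n} (hφ : Differentiable ℝ φ)
    (hsub : ∀ x, Orthonormal ℝ fun i => gradient (fun y => φ y i) x) :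
    ∃ σ : E m ≃ᵢ E m, ∃ τ : E n ≃ᵢ E n, ∀ p i, τ (φ (σ p)) i = p (j i) := by
  have haffine (i : Fin n) (y : E m) : φ y i = φ 0 i + ⟪gradient (fun y => φ y i) 0, y⟫ := by
    simpa using eq_add_inner_gradient_of_norm_gradient_eq_one (differentiable_euclidean.1 hφ i)
      (fun z => (hsub z).1 i) 0 y
  obtain ⟨b, hb⟩ := exists_orthonormalBasis_apply_embedding_eq (by simp) j (hsub 0)
  refine ⟨b.repr.symm.toIsometryEquiv, IsometryEquiv.subRight (φ 0), fun p i => ?_⟩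
  calc φ (b.repr.symm p) i - φ 0 i = ⟪b (j i), b.repr.symm p⟫ := by
        rw [haffine, hb, add_sub_cancel_left]
    _ = p (j i) := by rw [← b.repr_apply_apply, LinearIsometryEquiv.apply_symm_apply]

/-- a smooth Riemannian submersion `φ : ℝ³ → ℝ²` (the gradients of its
components are orthonormal at every point) which pulls back every harmonic function to
a biharmonic function is, up to Euclidean isometries of domain and target, the
orthogonal projection `(x, y, z) ↦ (x, y)`. -/
theorem stmt_9 (φ : E 3 → E 2) (hφ : ContDiff ℝ (⊤ : ℕ∞) φ)
    (hsub : ∀ x : E 3,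
      ⟪gradient (fun y => φ y 0) x, gradient (fun y => φ y 0) x⟫ = 1 ∧
      ⟪gradient (fun y => φ y 1) x, gradient (fun y => φ y 1) x⟫ = 1 ∧
      ⟪gradient (fun y => φ y 0) x, gradient (fun y => φ y 1) x⟫ = 0)
    (hGHM : IsGHM φ Set.univ) :
    ∃ σ : E 3 ≃ᵢ E 3, ∃ τ : E 2 ≃ᵢ E 2,
      ∀ p : E 3, ∀ i : Fin 2, τ (φ (σ p)) i = p (Fin.castSucc i) :=
  stmt_9_general Fin.castSuccEmb (hφ.differentiable (by simp)) fun x =>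
    orthonormal_fin_two_iff.2 (hsub x)
end
end
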